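/- Let S be a regular system of difference fields on V over A. Then for every u ⊆ V, S(u) is linearly disjoint from ∏_{v∈P(V,u,|u|-1)} S(v)^{alg} over ∏_{v∈P(u)^-} S(v), where P(V,u,k) = {v ⊆ V : |v ∩ u| ≤ k}. (First linear disjointness lemma for regular systems.) -/

import Mathlib

/-- Subfields `E` and `F` of `K` containing `C` are linearly disjoint over `C`
if the multiplication map `E ⊗[C] F → K` is injective. -/
def LinearDisjointOver {K : Type*} [Field K] (C E F : Subfield K) : Prop :=
  (Submodule.span C (E : Set K)).LinearDisjoint (Submodule.span C (F : Set K))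

/-- The relative algebraic closure `E^{alg}` of a subfield `E` inside `K`. -/
def algCl {K : Type*} [Field K] (E : Subfield K) : Subfield K :=
  Subfield.closure {x : K | IsAlgebraic E x}

/-- The inversive closure `E^{inv}`: the smallest subfield of `K` containing `E`
closed under `σ` and `σ⁻¹`. -/
def invCl {K : Type*} [Field K] (σ : K ≃+* K) (E : Subfield K) : Subfield K :=
  sInf {F : Subfield K | E ≤ F ∧ (∀ x ∈ F, σ x ∈ F) ∧ ∀ x ∈ F, σ.symm x ∈ F}

/-- `E` and `F` are independent over `C`: `((E·C)^{inv})^{alg}` and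
`((F·C)^{inv})^{alg}` are linearly disjoint over `(C^{inv})^{alg}`. -/
def IndependentOver {K : Type*} [Field K] (σ : K ≃+* K) (C E F : Subfield K) : Prop :=
  LinearDisjointOver (algCl (invCl σ C)) (algCl (invCl σ (E ⊔ C))) (algCl (invCl σ (F ⊔ C)))

/-- `F ≤ E` and `E/F` is a finite Galois extension (of subfields of `K`). -/
def IsFiniteGaloisExt {K : Type*} [Field K] (F E : Subfield K) : Prop :=
  ∃ h : F ≤ E,
    letI : Algebra F E := (Subfield.inclusion h).toAlgebra
    FiniteDimensional F E ∧ IsGalois F E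

/-- `I_u = {v ∩ u : v ∈ I}`. -/
def interFamily {V : Type*} [DecidableEq V] (I : Set (Finset V)) (u : Finset V) :
    Set (Finset V) :=
  {w | ∃ v ∈ I, w = v ∩ u}

/-- A system of difference fields on `V` over `A` inside `(K, σ)`. -/
structure DiffFieldSystem {K : Type*} [Field K] (σ : K ≃+* K)
    (V : Type*) [Fintype V] [DecidableEq V] (A : Subfield K) where
  /-- the underlying map from subsets of `V` to subfields of `K` -/
  S : Finset V → Subfield K
  mono : ∀ {u v : Finset V}, u ⊆ v → S u ≤ S v
  empty_eq : S ∅ = A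
  sigma_stable : ∀ u : Finset V, ∀ x ∈ S u, σ x ∈ S u
  perfect : ∀ u : Finset V, PerfectField (S u)
  /-- each `S u` has finite transcendence degree over `A` -/
  fin_trdeg : ∀ u : Finset V, ∃ t : Finset K,
    ∀ x ∈ S u, IsAlgebraic ↥(A ⊔ Subfield.closure (t : Set K)) x
  /-- each `S u` is the perfect closure of a difference subfield generated over
  `A` by a finite set (i.e. the smallest perfect `σ`-stable subfield of `K`
  containing `A` and that finite set) -/
  fin_gen : ∀ u : Finset V, ∃ t : Finset K,
    (A ≤ S u ∧ (t : Set K) ⊆ S u) ∧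
    ∀ F : Subfield K, A ≤ F → (t : Set K) ⊆ F → (∀ x ∈ F, σ x ∈ F) →
      PerfectField F → S u ≤ F
  /-- the family `(S {i})_{i ∈ V}` is independent over `A` -/
  indep : ∀ I₁ I₂ : Finset V, Disjoint I₁ I₂ →
    IndependentOver σ A (A ⊔ ⨆ i ∈ I₁, S {i}) (A ⊔ ⨆ i ∈ I₂, S {i})
  /-- for `|u| ≥ 2`, `S u` is a finite Galois extension of
  `S(u)⁻ = ∏_{v ∈ P(u)⁻} S v` -/
  galois : ∀ u : Finset V, 2 ≤ u.card →
    IsFiniteGaloisExt (⨆ v ∈ u.powerset.erase u, S v) (S u)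

namespace DiffFieldSystem

variable {K : Type*} [Field K] {σ : K ≃+* K}
variable {V : Type*} [Fintype V] [DecidableEq V] {A : Subfield K}

/-- `S(u)⁻ = ∏_{v ∈ P(u)⁻} S(v)`. -/
def Sminus (𝒮 : DiffFieldSystem σ V A) (u : Finset V) : Subfield K :=
  ⨆ v ∈ u.powerset.erase u, 𝒮.S v

/-- `𝒮` is an `I`-system: `S u = S(u)⁻` for `u ∉ I`. -/
def IsOn (𝒮 : DiffFieldSystem σ V A) (I : Set (Finset V)) : Prop :=
  ∀ u : Finset V, u ∉ I → 𝒮.S u = 𝒮.Sminus u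

/-- `𝒮` is regular: for every nonempty `u`, `S u` is linearly disjoint from
`∏_{v ∈ P(u)⁻} S(v)^{alg}` over `∏_{v ∈ P(u)⁻} S(v)`. -/
def Regular (𝒮 : DiffFieldSystem σ V A) : Prop :=
  ∀ u : Finset V, u ≠ ∅ →
    LinearDisjointOver (𝒮.Sminus u) (𝒮.S u) (⨆ v ∈ u.powerset.erase u, algCl (𝒮.S v))

end DiffFieldSystem

/-- `I` is a simplicial complex on `V`: downward closed with union all of `V`. -/
def IsSimplicialComplexOn (V : Type*) [DecidableEq V] (I : Set (Finset V)) : Prop :=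
  (∀ u ∈ I, ∀ v : Finset V, v ⊆ u → v ∈ I) ∧ ∀ i : V, ∃ u ∈ I, i ∈ u


section Aux

open Filter Polynomial

/-- germs represented by functions with values in `C` -/
def starSubfield {ι K : Type*} [Field K] (U : Ultrafilter ι) (C : Subfield K) :
    Subfield (Germ (U : Filter ι) K) where
  carrier := {g | ∃ f : ι → K, (∀ i, f i ∈ C) ∧ g = Germ.coeRingHom (U : Filter ι) f}
  mul_mem' := by
    rintro _ _ ⟨f, hf, rfl⟩ ⟨g, hg, rfl⟩
    exact ⟨f * g, fun i => C.mul_mem (hf i) (hg i), (map_mul _ _ _).symm⟩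
  one_mem' := ⟨1, fun i => C.one_mem, (map_one _).symm⟩
  add_mem' := by
    rintro _ _ ⟨f, hf, rfl⟩ ⟨g, hg, rfl⟩
    exact ⟨f + g, fun i => C.add_mem (hf i) (hg i), (map_add _ _ _).symm⟩
  zero_mem' := ⟨0, fun i => C.zero_mem, (map_zero _).symm⟩
  neg_mem' := by
    rintro _ ⟨f, hf, rfl⟩
    exact ⟨-f, fun i => C.neg_mem (hf i), (map_neg _ _).symm⟩
  inv_mem' := by
    rintro _ ⟨f, hf, rfl⟩
    exact ⟨fun i => (f i)⁻¹, fun i => C.inv_mem (hf i), rfl⟩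

theorem mem_starSubfield {ι K : Type*} [Field K] {U : Ultrafilter ι} {C : Subfield K}
    {g : Germ (U : Filter ι) K} : g ∈ starSubfield U C ↔
      ∃ f : ι → K, (∀ i, f i ∈ C) ∧ g = Germ.coeRingHom (U : Filter ι) f := Iff.rfl

theorem coeRingHom_eq_zero {ι K : Type*} [Field K] {U : Ultrafilter ι} {f : ι → K} :
    Germ.coeRingHom (U : Filter ι) f = 0 ↔ ∀ᶠ i in (U : Filter ι), f i = 0 :=
  Germ.coe_eq (f := f) (g := 0)

theorem starSubfield_mono {ι K : Type*} [Field K] {U : Ultrafilter ι} {C D : Subfield K}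
    (h : C ≤ D) : starSubfield U C ≤ starSubfield U D := by
  rintro _ ⟨f, hf, rfl⟩
  exact ⟨f, fun i => h (hf i), rfl⟩

theorem starSubfield_of_eventually {ι K : Type*} [Field K] {U : Ultrafilter ι} {C : Subfield K}
    {f : ι → K} (h : ∀ᶠ i in (U : Filter ι), f i ∈ C) :
    Germ.coeRingHom (U : Filter ι) f ∈ starSubfield U C := by
  classical
  refine ⟨fun i => if f i ∈ C then f i else 0, fun i => ?_, ?_⟩
  · dsimp only
    split_ifs with h
    · exact h
    · exact C.zero_mem
  · exact Germ.coe_eq.2 (h.mono fun i hi => by simp [hi])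

/-- `C` is relatively algebraically closed in `K`. -/
def RelClosed {K : Type*} [Field K] (C : Subfield K) : Prop :=
  ∀ x : K, IsAlgebraic C x → x ∈ C

theorem isAlgebraic_of_coeffs {K : Type*} [Field K] (C : Subfield K) (n : ℕ) (a : ℕ → K)
    (ha : ∀ k, a k ∈ C) (x : K)
    (h : x ^ n + ∑ k ∈ Finset.range n, a k * x ^ k = 0) : IsAlgebraic C x := by
  refine IsIntegral.isAlgebraic ⟨X ^ n + ∑ k ∈ Finset.range n, Polynomial.C ⟨a k, ha k⟩ * X ^ k, ?_, ?_⟩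
  · apply monic_X_pow_add
    refine (degree_sum_le _ _).trans_lt ?_
    refine (Finset.sup_lt_iff (WithBot.bot_lt_coe n)).2 ?_
    intro k hk
    exact (degree_C_mul_X_pow_le _ _).trans_lt (WithBot.coe_lt_coe.2 (Finset.mem_range.1 hk))
  · rw [eval₂_add, eval₂_finsetSum, eval₂_X_pow]
    simp only [eval₂_mul, eval₂_C, eval₂_X_pow]
    exact h

theorem monic_eval_expand {R : Type*} [CommRing R] {S : Type*} [CommRing S] (f : R →+* S)
    (p : R[X]) (hp : p.Monic) (x : S) :
    eval₂ f x p = x ^ p.natDegree + ∑ k ∈ Finset.range p.natDegree, f (p.coeff k) * x ^ k := by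
  rw [eval₂_eq_sum_range, Finset.sum_range_succ, hp.coeff_natDegree]
  simp [add_comm]

theorem starSubfield_relClosed {ι K : Type*} [Field K] (U : Ultrafilter ι) (C : Subfield K)
    (hC : RelClosed C) : RelClosed (starSubfield U C) := by
  intro z hz
  obtain ⟨f, rfl⟩ : ∃ f, Germ.coeRingHom (U : Filter ι) f = z := by
    induction z using Germ.inductionOn with | _ f => exact ⟨f, rfl⟩
  obtain ⟨p, hp, hpz⟩ := hz.isIntegral
  rw [monic_eval_expand _ _ hp] at hpz
  have hc := fun k => mem_starSubfield.1 (p.coeff k).2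
  choose a ha hpa using hc
  have : Germ.coeRingHom (U : Filter ι) (f ^ p.natDegree
      + ∑ k ∈ Finset.range p.natDegree, a k * f ^ k) = 0 := by
    rw [← hpz, map_add, map_sum]
    simp only [map_mul, map_pow, ← hpa]
    rfl
  rw [coeRingHom_eq_zero] at this
  refine starSubfield_of_eventually (this.mono fun i hi => hC _ ?_)
  refine isAlgebraic_of_coeffs C p.natDegree (fun k => a k i) (fun k => ha k i) _ ?_
  simpa using hi

instance germ_isAlgClosed {ι K : Type*} [Field K] [IsAlgClosed K] (U : Ultrafilter ι) :
    IsAlgClosed (Germ (U : Filter ι) K) := by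
  refine IsAlgClosed.of_exists_root _ fun p hp hirr => ?_
  have hc : ∀ k, ∃ f, Germ.coeRingHom (U : Filter ι) f = p.coeff k := fun k => by
    induction p.coeff k using Germ.inductionOn with | _ f => exact ⟨f, rfl⟩
  choose a ha using hc
  have hn : p.natDegree ≠ 0 := hirr.natDegree_pos.ne'
  have hroot : ∀ i, ∃ x : K, x ^ p.natDegree
      + ∑ k ∈ Finset.range p.natDegree, a k i * x ^ k = 0 := by
    intro i
    set q : K[X] := X ^ p.natDegree
      + ∑ k ∈ Finset.range p.natDegree, Polynomial.C (a k i) * X ^ k with hq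
    have hlt : (∑ k ∈ Finset.range p.natDegree, Polynomial.C (a k i) * X ^ k).degree
        < (p.natDegree : WithBot ℕ) := by
      refine (degree_sum_le _ _).trans_lt ?_
      rw [Finset.sup_lt_iff (WithBot.bot_lt_coe _)]
      intro k hk
      exact (degree_C_mul_X_pow_le _ _).trans_lt (by exact_mod_cast Finset.mem_range.1 hk)
    have hdeg : q.degree = p.natDegree := by
      rw [hq, degree_add_eq_left_of_degree_lt, degree_X_pow]
      rwa [degree_X_pow]
    obtain ⟨x, hx⟩ := IsAlgClosed.exists_root q (by rw [hdeg]; exact_mod_cast hn)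
    refine ⟨x, ?_⟩
    simpa [hq, IsRoot, eval_finsetSum] using hx
  choose f hf using hroot
  refine ⟨Germ.coeRingHom (U : Filter ι) f, ?_⟩
  rw [← eval₂_id, monic_eval_expand _ _ hp]
  simp only [RingHom.id_apply, ← ha, ← map_pow, ← map_mul, ← map_sum, ← map_add]
  rw [coeRingHom_eq_zero]
  exact Eventually.of_forall fun i => by simpa using hf i

theorem exists_algHom_of_finiteType (M A : Type*) [Field M] [IsAlgClosed M] [CommRing A]
    [Nontrivial A] [Algebra M A] [Algebra.FiniteType M A] : Nonempty (A →ₐ[M] M) := by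
  obtain ⟨m, hm⟩ := Ideal.exists_maximal A
  let := Ideal.Quotient.field m
  have : Module.Finite M (A ⧸ m) := finite_of_finite_type_of_isJacobsonRing M (A ⧸ m)
  have hb := IsAlgClosed.algebraMap_bijective_of_isIntegral (k := M) (K := A ⧸ m)
  exact ⟨((AlgEquiv.ofBijective (Algebra.ofId M (A ⧸ m)) hb).symm : (A ⧸ m) →ₐ[M] M).comp
    (Ideal.Quotient.mkₐ M m)⟩

theorem exists_germ_hom (M L K : Type*) [Field M] [IsAlgClosed M] [Field L] [Field K]
    [Algebra M L] [Algebra M K] :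
    ∃ (U : Ultrafilter (Finset L)) (θ : L →+* Germ (U : Filter (Finset L)) K),
      (∀ m : M, θ (algebraMap M L m) = Germ.coeRingHom (U : Filter (Finset L))
        (fun _ => algebraMap M K m)) ∧
      ∀ l : L, ∃ f : Finset L → M, θ l =
        Germ.coeRingHom (U : Filter (Finset L)) (fun i => algebraMap M K (f i)) := by
  classical
  have hg : ∀ T : Finset L, Nonempty (Algebra.adjoin M (T : Set L) →ₐ[M] M) := by
    intro T
    have : Algebra.FiniteType M (Algebra.adjoin M (T : Set L)) :=
      (Subalgebra.fg_iff_finiteType _).1 ⟨T, rfl⟩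
    exact exists_algHom_of_finiteType _ _
  let g := fun T => (hg T).some
  let r : L → Finset L → K := fun l T =>
    if h : l ∈ Algebra.adjoin M (T : Set L) then algebraMap M K (g T ⟨l, h⟩) else 0
  let U : Ultrafilter (Finset L) := Ultrafilter.of atTop
  have hU : (U : Filter (Finset L)) ≤ atTop := Ultrafilter.of_le _
  have hev : ∀ l : L, ∀ᶠ T : Finset L in (U : Filter (Finset L)), l ∈ Algebra.adjoin M (T : Set L) := by
    intro l
    refine hU ?_
    filter_upwards [eventually_ge_atTop ({l} : Finset L)] with T hT
    exact Algebra.subset_adjoin (by exact_mod_cast hT (Finset.mem_singleton_self l))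
  refine ⟨U, { toFun := fun l => Germ.coeRingHom (U : Filter (Finset L)) (r l), 
               map_one' := ?_, map_zero' := ?_, map_mul' := ?_, map_add' := ?_ }, ?_, ?_⟩
  · rw [← map_one (Germ.coeRingHom (U : Filter (Finset L)))]
    refine Germ.coe_eq.2 (Eventually.of_forall fun T => ?_)
    have h1 : (1 : L) ∈ Algebra.adjoin M (T : Set L) := one_mem _
    simp only [r, dif_pos h1]
    have : (⟨1, h1⟩ : Algebra.adjoin M (T : Set L)) = 1 := rfl
    rw [this]; simp
  · intro x y
    rw [← map_mul]
    refine Germ.coe_eq.2 ?_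
    filter_upwards [hev x, hev y] with T hx hy
    simp only [r, dif_pos hx, dif_pos hy, dif_pos (mul_mem hx hy), Pi.mul_apply]
    rw [← map_mul, ← map_mul]; rfl
  · rw [← map_zero (Germ.coeRingHom (U : Filter (Finset L)))]
    refine Germ.coe_eq.2 (Eventually.of_forall fun T => ?_)
    have h1 : (0 : L) ∈ Algebra.adjoin M (T : Set L) := zero_mem _
    simp only [r, dif_pos h1]
    have : (⟨0, h1⟩ : Algebra.adjoin M (T : Set L)) = 0 := rfl
    rw [this]; simp
  · intro x y
    rw [← map_add]
    refine Germ.coe_eq.2 ?_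
    filter_upwards [hev x, hev y] with T hx hy
    simp only [r, dif_pos hx, dif_pos hy, dif_pos (add_mem hx hy), Pi.add_apply]
    rw [← map_add, ← map_add]; rfl
  · intro m
    refine Germ.coe_eq.2 (Eventually.of_forall fun T => ?_)
    have h1 : algebraMap M L m ∈ Algebra.adjoin M (T : Set L) := Subalgebra.algebraMap_mem _ _
    simp only [r, dif_pos h1]
    have : (⟨algebraMap M L m, h1⟩ : Algebra.adjoin M (T : Set L)) = algebraMap M _ m := rfl
    rw [this]; simp
  · intro l
    refine ⟨fun T => if h : l ∈ Algebra.adjoin M (T : Set L) then g T ⟨l, h⟩ else 0, ?_⟩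
    refine Germ.coe_eq.2 (Eventually.of_forall fun T => ?_)
    simp only [r]
    split_ifs <;> simp

theorem IsAlgebraic.subfield_mono {K : Type*} [Field K] {E F : Subfield K} (h : E ≤ F) {x : K}
    (hx : IsAlgebraic E x) : IsAlgebraic F x := by
  let : Algebra E F := (Subfield.inclusion h).toAlgebra
  have : IsScalarTower E F K := IsScalarTower.of_algebraMap_eq' rfl
  exact hx.extendScalars (FaithfulSMul.algebraMap_injective E F)

theorem mem_algCl {K : Type*} [Field K] {E : Subfield K} {x : K} :
    x ∈ algCl E ↔ IsAlgebraic E x := by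
  have h : algCl E ≤ (algebraicClosure E K).toSubfield :=
    Subfield.closure_le.2 fun y hy => mem_algebraicClosure_iff'.2 hy.isIntegral
  exact ⟨fun hx => (mem_algebraicClosure_iff'.1 (h hx)).isAlgebraic,
    fun hx => Subfield.subset_closure hx⟩

theorem le_algCl {K : Type*} [Field K] (E : Subfield K) : E ≤ algCl E := fun x hx =>
  mem_algCl.2 (isAlgebraic_algebraMap (⟨x, hx⟩ : E))

theorem relClosed_algCl {K : Type*} [Field K] (E : Subfield K) : RelClosed (algCl E) := by
  intro x hx
  let : Algebra E (algCl E) := (Subfield.inclusion (le_algCl E)).toAlgebra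
  have : IsScalarTower E (algCl E) K := IsScalarTower.of_algebraMap_eq' rfl
  have : Algebra.IsAlgebraic E (algCl E) := ⟨fun y =>
    (isAlgebraic_algebraMap_iff (A := K) (FaithfulSMul.algebraMap_injective (algCl E) K)).1 (mem_algCl.1 y.2)⟩
  exact mem_algCl.2 (hx.restrictScalars E)

theorem algCl_le {K : Type*} [Field K] {E C : Subfield K} (hC : RelClosed C) (h : E ≤ C) :
    algCl E ≤ C := fun _ hx => hC _ ((mem_algCl.1 hx).subfield_mono h)

theorem RelClosed.isAlgClosed {K : Type*} [Field K] [IsAlgClosed K] {C : Subfield K}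
    (hC : RelClosed C) : IsAlgClosed C := by
  refine IsAlgClosed.of_exists_root _ fun p hp hirr => ?_
  obtain ⟨x, hx⟩ := IsAlgClosed.exists_aeval_eq_zero K p (degree_pos_of_irreducible hirr).ne'
  have hx' : x ∈ C := hC x ⟨p, hp.ne_zero, hx⟩
  refine ⟨⟨x, hx'⟩, ?_⟩
  apply FaithfulSMul.algebraMap_injective C K
  rw [map_zero, ← hx]
  exact (aeval_algebraMap_apply_eq_algebraMap_eval (A := K) (⟨x, hx'⟩ : C) p).symm

theorem exists_extend {R K Ω : Type*} [CommRing R] [IsDomain R] [Field K] [Field Ω]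
    [IsAlgClosed Ω] (i : R →+* K) (hi : Function.Injective i) (j : R →+* Ω)
    (hj : Function.Injective j) :
    ∃ (N : Subfield K) (ψ : N →+* Ω), RelClosed N ∧
      ∃ h : ∀ r, i r ∈ N, ∀ r, ψ ⟨i r, h r⟩ = j r := by
  let : Algebra R K := i.toAlgebra
  let : Algebra R Ω := j.toAlgebra
  have : FaithfulSMul R K := (faithfulSMul_iff_algebraMap_injective R K).2 hi
  have : FaithfulSMul R Ω := (faithfulSMul_iff_algebraMap_injective R Ω).2 hj
  let N : Subfield K :=
    { carrier := {x | IsAlgebraic R x}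
      mul_mem' := fun hx hy => IsAlgebraic.mul hx hy
      one_mem' := isAlgebraic_one
      add_mem' := fun hx hy => IsAlgebraic.add hx hy
      zero_mem' := isAlgebraic_zero
      neg_mem' := fun hx => IsAlgebraic.neg hx
      inv_mem' := fun x hx => IsAlgebraic.inv hx }
  have h : ∀ r, i r ∈ N := fun r => isAlgebraic_algebraMap (A := K) r
  let : Algebra R N := (i.codRestrict N h).toAlgebra
  have : IsScalarTower R N K := IsScalarTower.of_algebraMap_eq' rfl
  have hRN : Function.Injective (algebraMap R N) := fun a b hab => hi (congrArg Subtype.val hab)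
  have : FaithfulSMul R N := (faithfulSMul_iff_algebraMap_injective R N).2 hRN
  have : Algebra.IsAlgebraic R N := ⟨fun y =>
    (isAlgebraic_algebraMap_iff (A := K) (FaithfulSMul.algebraMap_injective N K)).1 y.2⟩
  let ψ : N →ₐ[R] Ω := IsAlgClosed.lift
  exact ⟨N, ψ, fun x hx => hx.restrictScalars R, h, fun r => ψ.commutes r⟩

theorem span_subfield {K : Type*} [Field K] {C E : Subfield K} (h : C ≤ E) :
    Submodule.span C (E : Set K) = Subalgebra.toSubmodule (Subfield.extendScalars h).toSubalgebra :=
  Submodule.span_eq (Subalgebra.toSubmodule (Subfield.extendScalars h).toSubalgebra)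

open TensorProduct in
theorem exists_specialization.{v} {K : Type v} [Field K] [IsAlgClosed K] (M B L : Subfield K)
    (hMB : M ≤ B) (hML : M ≤ L) (hM : RelClosed M) (h : LinearDisjointOver M B L) :
    ∃ (ι : Type v) (U : Ultrafilter ι) (N : Subfield K) (ψ : N →+* Germ (U : Filter ι) K),
      RelClosed N ∧
      (∀ b ∈ B, ∃ hb : b ∈ N, ψ ⟨b, hb⟩ = Germ.coeRingHom (U : Filter ι) (fun _ => b)) ∧
      (∀ l ∈ L, ∃ hl : l ∈ N, ψ ⟨l, hl⟩ ∈ starSubfield U M) := by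
  have := hM.isAlgClosed
  let B' := Subfield.extendScalars hMB
  let L' := Subfield.extendScalars hML
  have hinj : Function.Injective (Algebra.TensorProduct.productMap B'.val L'.val) := by
    unfold LinearDisjointOver at h
    rw [span_subfield hMB, span_subfield hML] at h
    exact Subalgebra.linearDisjoint_iff_injective.1 ((Subalgebra.linearDisjoint_iff _ _).2 h)
  obtain ⟨U, θ, hθ, hθM⟩ := exists_germ_hom M L' K
  let q := Germ.coeRingHom (R := K) (U : Filter (Finset L'))
  let k : K →+* Germ (U : Filter (Finset L')) K := q.comp (Pi.constRingHom _ K)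
  let : Algebra M (Germ (U : Filter (Finset L')) K) := (k.comp (algebraMap M K)).toAlgebra
  let kB : B' →ₐ[M] Germ (U : Filter (Finset L')) K :=
    { k.comp (algebraMap B' K) with commutes' := fun m => rfl }
  let θ' : L' →ₐ[M] Germ (U : Filter (Finset L')) K :=
    { θ with commutes' := fun m => hθ m }
  have hinj2 : Function.Injective (Algebra.TensorProduct.productMap kB θ') := by
    rw [injective_iff_map_eq_zero]
    intro t ht
    obtain ⟨c, rfl⟩ := TensorProduct.eq_repr_basis_left (Module.Basis.ofVectorSpace M B') t
    set b := Module.Basis.ofVectorSpace M B'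
    choose f hf using hθM
    have hz : q (∑ i ∈ c.support, fun T => (b i : K) * algebraMap M K (f (c i) T)) = 0 := by
      rw [← ht, Finsupp.sum, map_sum, map_sum]
      refine Finset.sum_congr rfl fun i _ => ?_
      rw [Algebra.TensorProduct.productMap_apply_tmul]
      change _ = k (b i) * θ (c i)
      rw [hf]
      exact map_mul q (fun _ => (b i : K)) _
    rw [coeRingHom_eq_zero] at hz
    have hci : ∀ i ∈ c.support, θ (c i) = 0 := by
      intro i hi
      rw [hf, coeRingHom_eq_zero]
      refine hz.mono fun T hT => ?_
      have hli := linearIndependent_iff'.1 b.linearIndependent c.support (fun i => f (c i) T) ?_ i hi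
      · rw [hli, map_zero]
      · apply Subtype.val_injective
        rw [Finset.sum_apply] at hT
        simp only [AddSubmonoidClass.coe_finsetSum]
        refine Eq.trans (Finset.sum_congr rfl fun i _ => ?_) hT
        exact mul_comm _ _
    have hc : c = 0 := by
      ext i
      by_contra hne
      have hi : i ∈ c.support := by
        rw [Finsupp.mem_support_iff]
        rintro h0
        exact hne (by rw [h0]; rfl)
      have := (map_eq_zero θ).1 (hci i hi)
      exact hne (by rw [this]; rfl)
    rw [hc, Finsupp.sum_zero_index]
  have : IsDomain (B' ⊗[M] L') := hinj.isDomain (Algebra.TensorProduct.productMap B'.val L'.val)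
  obtain ⟨N, ψ, hN, hR, hψ⟩ := exists_extend
    (Algebra.TensorProduct.productMap B'.val L'.val).toRingHom hinj
    (Algebra.TensorProduct.productMap kB θ').toRingHom hinj2
  refine ⟨_, U, N, ψ, hN, fun b hb => ?_, fun l hl => ?_⟩
  · have h1 : (Algebra.TensorProduct.productMap B'.val L'.val).toRingHom
        ((⟨b, hb⟩ : B') ⊗ₜ[M] (1 : L')) = b := by
      change Algebra.TensorProduct.productMap B'.val L'.val _ = b
      rw [Algebra.TensorProduct.productMap_apply_tmul, map_one, mul_one]; rfl
    have h2 := hψ ((⟨b, hb⟩ : B') ⊗ₜ[M] (1 : L'))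
    refine ⟨h1 ▸ hR _, ?_⟩
    simp only [h1] at h2
    rw [h2]
    change Algebra.TensorProduct.productMap kB θ' _ = _
    rw [Algebra.TensorProduct.productMap_apply_tmul, map_one, mul_one]; rfl
  · have h1 : (Algebra.TensorProduct.productMap B'.val L'.val).toRingHom
        ((1 : B') ⊗ₜ[M] (⟨l, hl⟩ : L')) = l := by
      change Algebra.TensorProduct.productMap B'.val L'.val _ = l
      rw [Algebra.TensorProduct.productMap_apply_tmul, map_one, one_mul]; rfl
    have h2 := hψ ((1 : B') ⊗ₜ[M] (⟨l, hl⟩ : L'))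
    refine ⟨h1 ▸ hR _, ?_⟩
    simp only [h1] at h2
    rw [h2]
    change Algebra.TensorProduct.productMap kB θ' _ ∈ _
    rw [Algebra.TensorProduct.productMap_apply_tmul, map_one, one_mul]
    obtain ⟨f, hf⟩ := hθM ⟨l, hl⟩
    exact ⟨_, fun i => (f i).2, hf⟩

/-- The elements whose specialization lies in `C` generically. -/
def pullField {ι K : Type*} [Field K] {U : Ultrafilter ι} {N : Subfield K}
    (ψ : N →+* Germ (U : Filter ι) K) (C : Subfield K) : Subfield K :=
  ((starSubfield U C).comap ψ).map N.subtype

theorem mem_pullField {ι K : Type*} [Field K] {U : Ultrafilter ι} {N : Subfield K}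
    {ψ : N →+* Germ (U : Filter ι) K} {C : Subfield K} {x : K} :
    x ∈ pullField ψ C ↔ ∃ h : x ∈ N, ψ ⟨x, h⟩ ∈ starSubfield U C := by
  constructor
  · rintro ⟨y, hy, rfl⟩
    exact ⟨y.2, hy⟩
  · rintro ⟨h, hx⟩
    exact ⟨⟨x, h⟩, hx, rfl⟩

theorem pullField_mono {ι K : Type*} [Field K] {U : Ultrafilter ι} {N : Subfield K}
    {ψ : N →+* Germ (U : Filter ι) K} {C D : Subfield K} (h : C ≤ D) :
    pullField ψ C ≤ pullField ψ D := by
  intro x hx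
  obtain ⟨hN, hx⟩ := mem_pullField.1 hx
  exact mem_pullField.2 ⟨hN, starSubfield_mono h hx⟩

theorem pullField_relClosed {ι K : Type*} [Field K] {U : Ultrafilter ι} {N : Subfield K}
    (ψ : N →+* Germ (U : Filter ι) K) {C : Subfield K} (hN : RelClosed N) (hC : RelClosed C) :
    RelClosed (pullField ψ C) := by
  intro x hx
  have hle : pullField ψ C ≤ N := fun y hy => (mem_pullField.1 hy).1
  have hxN : x ∈ N := hN x (hx.subfield_mono hle)
  refine mem_pullField.2 ⟨hxN, starSubfield_relClosed U C hC _ ?_⟩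
  obtain ⟨p, hp, hpx⟩ := hx.isIntegral
  let φ : pullField ψ C →+* starSubfield U C :=
    (ψ.comp (Subfield.inclusion hle)).codRestrict _ fun y => (mem_pullField.1 y.2).2
  refine IsIntegral.isAlgebraic ⟨p.map φ, hp.map _, ?_⟩
  rw [eval₂_map]
  have h1 : eval₂ (Subfield.inclusion hle) (⟨x, hxN⟩ : N) p = 0 := by
    apply N.subtype_injective
    rw [hom_eval₂, map_zero, ← hpx]
    rfl
  have h2 := congrArg ψ h1
  rw [hom_eval₂, map_zero] at h2
  exact h2

theorem linearDisjointOver_of_specialization {ι K : Type*} [Field K] {U : Ultrafilter ι}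
    {N : Subfield K} (ψ : N →+* Germ (U : Filter ι) K) {C E D F : Subfield K}
    (hCE : C ≤ E) (hCF : C ≤ F) (h : LinearDisjointOver C E D)
    (hE : ∀ b ∈ E, ∃ hb : b ∈ N, ψ ⟨b, hb⟩ = Germ.coeRingHom (U : Filter ι) (fun _ => b))
    (hF : F ≤ pullField ψ D) : LinearDisjointOver C E F := by
  unfold LinearDisjointOver at *
  let b := Module.Basis.ofVectorSpace C (Submodule.span C (E : Set K))
  have hker := h.linearIndependent_left_of_flat b.linearIndependent
  refine Submodule.LinearDisjoint.of_basis_left _ _ b ?_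
  rw [LinearMap.ker_eq_bot'] at hker ⊢
  intro c hc
  have hbE : ∀ i, (b i : K) ∈ E := fun i => by
    exact (span_subfield hCE).le (b i).2
  have hcF : ∀ i, (c i : K) ∈ F := fun i => by
    exact (span_subfield hCF).le (c i).2
  have hbN := fun i => hE _ (hbE i)
  choose hbN hbψ using hbN
  have hcN := fun i => mem_pullField.1 (hF (hcF i))
  choose hcN hcψ using hcN
  choose f hfD hf using fun i => mem_starSubfield.1 (hcψ i)
  have hsum : ∑ i ∈ c.support, (b i : K) * (c i : K) = 0 := by
    rw [← hc, Submodule.mulLeftMap_apply]; rfl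
  have hsumN : ∑ i ∈ c.support, (⟨b i, hbN i⟩ : N) * ⟨c i, hcN i⟩ = 0 := by
    apply N.subtype_injective
    rw [map_sum, map_zero, ← hsum]
    rfl
  have hq := congrArg ψ hsumN
  simp only [map_sum, map_mul, map_zero, hbψ, hf] at hq
  simp only [← map_mul, ← map_sum] at hq
  rw [coeRingHom_eq_zero] at hq
  have hev : ∀ᶠ t in (U : Filter ι), ∀ i ∈ c.support, f i t = 0 := by
    refine hq.mono fun t ht i hi => ?_
    rw [Finset.sum_apply] at ht
    classical
    let d : _ →₀ Submodule.span C (D : Set K) := Finsupp.onFinset c.support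
      (fun i => if i ∈ c.support then ⟨f i t, Submodule.subset_span (hfD i t)⟩ else 0)
      (fun i hi => by by_contra hne; simp [hne] at hi)
    have hd : d = 0 := by
      apply hker
      rw [Submodule.mulLeftMap_apply, Finsupp.onFinset_sum _ (by simp), ← ht]
      refine Finset.sum_congr rfl fun i hi => ?_
      simp only [if_pos hi]; rfl
    have := DFunLike.congr_fun hd i
    simp only [d, Finsupp.onFinset_apply, if_pos hi] at this
    exact congrArg Subtype.val this
  ext i
  by_contra hne
  have hi : i ∈ c.support := by
    rw [Finsupp.mem_support_iff]
    rintro h0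
    exact hne (by rw [h0]; rfl)
  have h0 : ψ ⟨c i, hcN i⟩ = 0 := by
    rw [hf, coeRingHom_eq_zero]
    exact hev.mono fun t ht => ht i hi
  have := (map_eq_zero ψ).1 h0
  exact hne (congrArg (Subtype.val : N → K) this)


theorem invCl_eq_self {K : Type*} [Field K] (σ : K ≃+* K) (A : Subfield K)
    (hA : A.map (σ : K →+* K) = A) : invCl σ A = A := by
  apply le_antisymm
  · refine sInf_le ⟨le_rfl, fun x hx => ?_, fun x hx => ?_⟩
    · rw [← hA]; exact ⟨x, hx, rfl⟩
    · rw [← hA] at hx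
      obtain ⟨y, hy, rfl⟩ := hx
      simpa using hy
  · exact le_sInf fun F hF => hF.1

theorem le_invCl {K : Type*} [Field K] (σ : K ≃+* K) (A : Subfield K) : A ≤ invCl σ A :=
  le_sInf fun _ hF => hF.1

theorem invCl_mono {K : Type*} [Field K] (σ : K ≃+* K) {A B : Subfield K} (h : A ≤ B) :
    invCl σ A ≤ invCl σ B :=
  le_sInf fun _ hF => sInf_le ⟨h.trans hF.1, hF.2⟩

theorem algCl_mono {K : Type*} [Field K] {A B : Subfield K} (h : A ≤ B) : algCl A ≤ algCl B :=
  algCl_le (relClosed_algCl B) (h.trans (le_algCl B))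

theorem linearDisjointOver_self_right {K : Type*} [Field K] (C E : Subfield K) :
    LinearDisjointOver C E C := by
  unfold LinearDisjointOver
  have h1 : Submodule.span C (C : Set K) ≤ 1 := by
    rw [Submodule.span_le]
    intro x hx
    exact Submodule.mem_one.2 ⟨(⟨x, hx⟩ : C), rfl⟩
  exact Submodule.LinearDisjoint.of_right_le_one_of_flat _ _ h1

namespace DiffFieldSystem

theorem le_algCl_points {K : Type*} [Field K] {σ : K ≃+* K} {V : Type*} [Fintype V]
    [DecidableEq V] {A : Subfield K} (𝒮 : DiffFieldSystem σ V A) (v : Finset V) :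
    𝒮.S v ≤ algCl (A ⊔ ⨆ i ∈ v, 𝒮.S {i}) := by
  induction v using Finset.strongInduction with
  | H v ih =>
    rcases Nat.lt_or_ge v.card 2 with h | h
    · rcases Nat.lt_or_ge v.card 1 with h1 | h1
      · have : v = ∅ := Finset.card_eq_zero.1 (by omega)
        subst this
        rw [𝒮.empty_eq]
        exact le_sup_left.trans (le_algCl _)
      · obtain ⟨i, rfl⟩ := Finset.card_eq_one.1 (show v.card = 1 by omega)
        refine le_trans ?_ (le_sup_right.trans (le_algCl _))
        exact le_iSup₂ (f := fun j (_ : j ∈ ({i} : Finset V)) => 𝒮.S {j}) i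
          (Finset.mem_singleton_self i)
    · obtain ⟨hle, hfin, -⟩ := 𝒮.galois v h
      have hsub : (⨆ w ∈ v.powerset.erase v, 𝒮.S w) ≤ algCl (A ⊔ ⨆ i ∈ v, 𝒮.S {i}) := by
        refine iSup₂_le fun w hw => ?_
        have hw' : w ⊂ v := by
          rw [Finset.mem_erase, Finset.mem_powerset] at hw
          exact Finset.ssubset_iff_subset_ne.2 ⟨hw.2, hw.1⟩
        refine (ih w hw').trans (algCl_mono (sup_le_sup_left ?_ _))
        exact biSup_mono fun i hi => hw'.1 hi
      intro x hx
      refine relClosed_algCl _ x (IsAlgebraic.subfield_mono hsub ?_)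
      let : Algebra ↥(⨆ w ∈ v.powerset.erase v, 𝒮.S w) (𝒮.S v) :=
        (Subfield.inclusion hle).toAlgebra
      have : IsScalarTower ↥(⨆ w ∈ v.powerset.erase v, 𝒮.S w) (𝒮.S v) K :=
        IsScalarTower.of_algebraMap_eq' rfl
      have hx' : IsAlgebraic ↥(⨆ w ∈ v.powerset.erase v, 𝒮.S w) (⟨x, hx⟩ : 𝒮.S v) :=
        (Algebra.IsAlgebraic.of_finite _ (𝒮.S v)).isAlgebraic _
      exact hx'.algebraMap (A := K)

end DiffFieldSystem

end Aux

/-- (First linear disjointness lemma for regular systems.) If `𝒮`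
is a regular system of difference fields on `V` over `A`, then for every
`u ⊆ V`, `S(u)` is linearly disjoint from `∏_{v ∈ P(V,u,|u|-1)} S(v)^{alg}`
over `∏_{v ∈ P(u)⁻} S(v)`, where `P(V,u,|u|-1) = {v ⊆ V : |v ∩ u| ≤ |u|-1}`
(equivalently `|v ∩ u| < |u|`). -/
theorem regular_first_linear_disjointness
    {K : Type*} [Field K] [IsAlgClosed K] (σ : K ≃+* K)
    {V : Type*} [Fintype V] [DecidableEq V]
    (A : Subfield K) (hAperf : PerfectField A) (hAinv : A.map (σ : K →+* K) = A)
    (𝒮 : DiffFieldSystem σ V A) (hreg : 𝒮.Regular)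
    (u : Finset V) :
    LinearDisjointOver
      (𝒮.Sminus u)
      (𝒮.S u)
      (⨆ v ∈ {v : Finset V | (v ∩ u).card < u.card}, algCl (𝒮.S v)) := by
  classical
  by_cases hu : u = ∅
  · subst hu
    have h1 : (⨆ v ∈ {v : Finset V | (v ∩ ∅).card < (∅ : Finset V).card}, algCl (𝒮.S v))
        = 𝒮.Sminus ∅ := by
      simp [DiffFieldSystem.Sminus]
    rw [h1]
    exact linearDisjointOver_self_right _ _
  set F := ⨆ v ∈ {v : Finset V | (v ∩ u).card < u.card}, algCl (𝒮.S v) with hF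
  set D := ⨆ v ∈ u.powerset.erase u, algCl (𝒮.S v) with hD
  have hind := 𝒮.indep u uᶜ disjoint_compl_right
  unfold IndependentOver at hind
  rw [invCl_eq_self σ A hAinv] at hind
  set J : Finset V → Subfield K := fun I => A ⊔ ⨆ i ∈ I, 𝒮.S {i} with hJ
  set B := algCl (invCl σ (J u ⊔ A)) with hB
  set L := algCl (invCl σ (J uᶜ ⊔ A)) with hL
  have hAle : ∀ I, algCl A ≤ algCl (invCl σ (J I ⊔ A)) := fun I =>
    algCl_mono (le_sup_right.trans (le_invCl σ _))
  obtain ⟨ι, U, N, ψ, hN, hψB, hψL⟩ := exists_specialization (algCl A) B L (hAle u) (hAle uᶜ)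
    (relClosed_algCl A) hind
  have hJle : ∀ I, J I ≤ algCl (invCl σ (J I ⊔ A)) := fun I =>
    le_sup_left.trans ((le_invCl σ _).trans (le_algCl _))
  have hSB : ∀ w, w ⊆ u → 𝒮.S w ≤ B := fun w hw =>
    (𝒮.mono hw).trans ((𝒮.le_algCl_points u).trans (algCl_le (relClosed_algCl _) (hJle u)))
  have hAS : ∀ w, A ≤ 𝒮.S w := fun w =>
    𝒮.empty_eq.ge.trans (𝒮.mono (Finset.empty_subset w))
  have hmem : ∀ w, w ∈ u.powerset.erase u → (w ∩ u).card < u.card := fun w hw => by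
    rw [Finset.mem_erase, Finset.mem_powerset] at hw
    rw [Finset.inter_eq_left.2 hw.2]
    exact Finset.card_lt_card (Finset.ssubset_iff_subset_ne.2 ⟨hw.2, hw.1⟩)
  have hCE : 𝒮.Sminus u ≤ 𝒮.S u := iSup₂_le fun w hw =>
    𝒮.mono (Finset.mem_powerset.1 (Finset.mem_of_mem_erase hw))
  have hCF : 𝒮.Sminus u ≤ F := iSup₂_le fun w hw =>
    (le_algCl _).trans (le_iSup₂ (f := fun v (_ : v ∈ {v : Finset V | (v ∩ u).card < u.card}) =>
      algCl (𝒮.S v)) w (hmem w hw))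
  refine linearDisjointOver_of_specialization ψ hCE hCF (hreg u hu)
    (fun b hb => hψB b (hSB u subset_rfl hb)) ?_
  refine iSup₂_le fun v hv => ?_
  have hv' : (v ∩ u).card < u.card := hv
  have hw : v ∩ u ∈ u.powerset.erase u := by
    rw [Finset.mem_erase, Finset.mem_powerset]
    exact ⟨fun h => by rw [h] at hv'; exact lt_irrefl _ hv', Finset.inter_subset_right⟩
  have hCD : algCl (𝒮.S (v ∩ u)) ≤ D :=
    le_iSup₂ (f := fun v (_ : v ∈ u.powerset.erase u) => algCl (𝒮.S v)) (v ∩ u) hw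
  refine le_trans ?_ (pullField_mono hCD)
  have hrc := pullField_relClosed ψ hN (relClosed_algCl (𝒮.S (v ∩ u)))
  refine algCl_le hrc ((𝒮.le_algCl_points v).trans (algCl_le hrc ?_))
  have hS : 𝒮.S (v ∩ u) ≤ pullField ψ (algCl (𝒮.S (v ∩ u))) := by
    intro x hx
    obtain ⟨hxN, hx'⟩ := hψB x (hSB _ Finset.inter_subset_right hx)
    refine mem_pullField.2 ⟨hxN, ?_⟩
    rw [hx']
    exact ⟨_, fun _ => le_algCl _ hx, rfl⟩
  have hLp : L ≤ pullField ψ (algCl (𝒮.S (v ∩ u))) := by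
    intro x hx
    obtain ⟨hxN, hx'⟩ := hψL x hx
    exact mem_pullField.2 ⟨hxN, starSubfield_mono (algCl_mono (hAS _)) hx'⟩
  refine sup_le ((hAS _).trans hS) (iSup₂_le fun i hi => ?_)
  by_cases hiu : i ∈ u
  · exact (𝒮.mono (by simp [hi, hiu])).trans hS
  · refine le_trans ?_ ((hJle uᶜ).trans hLp)
    refine le_trans ?_ le_sup_right
    exact le_iSup₂ (f := fun j (_ : j ∈ uᶜ) => 𝒮.S {j}) i (Finset.mem_compl.2 hiu)
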